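/- Let a_1, a_2 ∈ ℚ[[z]] be the formal power series whose n-th coefficients are c(n, n+1) and c(n, n) respectively. Then a_1 = 1 + z·a_1² and a_2 = z·a_1 + 2z·a_1·a_2 hold in ℚ[[z]]. -/

import Mathlib

/-!
The key point is that a context of size `n` has at most `n + 1` holes, i.e. `c n i = 0` for
`i > n + 1` (`c_eq_zero`). Hence in the recursion for `c (n+1) (n+2)` the abstraction sum is empty
and, in the application sum, both parts must have the maximal number of holes; this is the
convolution `a₁²`. In the recursion for `c (n+1) (n+1)` the abstraction sum reduces to its single
term `c n (n+1)`, and in the application sum exactly one of the two parts falls one hole short of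
the maximum, which gives the convolutions `a₂ a₁` and `a₁ a₂`.
-/

/-- `c n i` counts `i`-contexts (closed λ-terms with `i` holes) of size `n`. -/
def c : ℕ → ℕ → ℕ
  | 0, i => if i = 1 then 1 else 0
  | n+1, i => (∑ j ∈ Finset.Icc i (n+1), Nat.choose j i * c n j)
      + ∑ j ∈ Finset.range (i+1), ∑ k ∈ (Finset.range (n+1)).attach,
          c k.1 j * c (n - k.1) (i - j)
termination_by n _ => n
decreasing_by
  · exact Nat.lt_succ_self n
  · exact Finset.mem_range.mp k.2
  · exact Nat.lt_succ_of_le (Nat.sub_le n k.1)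

/-- `a₁` is the power series whose `n`-th coefficient is `c n (n+1)`. -/
noncomputable def a1 : PowerSeries ℚ := PowerSeries.mk fun n => (c n (n+1) : ℚ)

/-- `a₂` is the power series whose `n`-th coefficient is `c n n`. -/
noncomputable def a2 : PowerSeries ℚ := PowerSeries.mk fun n => (c n n : ℚ)

/-- The defining recursion with the application sum over `k` outermost. -/
lemma c_succ (n i : ℕ) : c (n+1) i = (∑ j ∈ Finset.Icc i (n+1), Nat.choose j i * c n j)
    + ∑ k ∈ Finset.range (n+1), ∑ j ∈ Finset.range (i+1), c k j * c (n - k) (i - j) := by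
  rw [c, Finset.sum_comm,
    Finset.sum_attach (Finset.range (n+1))
      (fun k => ∑ j ∈ Finset.range (i+1), c k j * c (n - k) (i - j))]

lemma c_eq_zero (n : ℕ) : ∀ i, n + 1 < i → c n i = 0 := by
  induction n using Nat.strong_induction_on with
  | _ n ih =>
    intro i hi
    cases n with
    | zero =>
      rw [c, if_neg (by omega)]
    | succ n =>
      rw [c_succ, Finset.Icc_eq_empty (by omega), Finset.sum_empty, zero_add]
      refine Finset.sum_eq_zero fun k hk => Finset.sum_eq_zero fun j hj => ?_
      rw [Finset.mem_range] at hk hj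
      by_cases h : k + 1 < j
      · rw [ih k (by omega) j h, zero_mul]
      · rw [ih (n - k) (by omega) (i - j) (by omega), mul_zero]

lemma c_succ_top (n : ℕ) :
    c (n+1) (n+2) = ∑ k ∈ Finset.range (n+1), c k (k+1) * c (n - k) (n - k + 1) := by
  rw [c_succ, Finset.Icc_eq_empty (by omega), Finset.sum_empty, zero_add]
  refine Finset.sum_congr rfl fun k hk => ?_
  rw [Finset.mem_range] at hk
  rw [Finset.sum_eq_single (k+1)]
  · rw [show n + 2 - (k + 1) = n - k + 1 by omega]
  · intro j hj hne
    rw [Finset.mem_range] at hj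
    by_cases h : k + 1 < j
    · rw [c_eq_zero k j h, zero_mul]
    · rw [c_eq_zero (n - k) (n + 2 - j) (by omega), mul_zero]
  · intro h
    exact absurd (Finset.mem_range.mpr (by omega)) h

lemma c_succ_diag (n : ℕ) :
    c (n+1) (n+1) = c n (n+1) + ∑ k ∈ Finset.range (n+1),
      (c k k * c (n - k) (n - k + 1) + c k (k+1) * c (n - k) (n - k)) := by
  rw [c_succ, Finset.Icc_self, Finset.sum_singleton, Nat.choose_self, one_mul]
  congr 1
  refine Finset.sum_congr rfl fun k hk => ?_
  rw [Finset.mem_range] at hk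
  rw [Finset.sum_eq_add k (k+1) (by omega)]
  · rw [show n + 1 - k = n - k + 1 by omega, show n + 1 - (k + 1) = n - k by omega]
  · intro j hj hne
    rw [Finset.mem_range] at hj
    by_cases h : k + 1 < j
    · rw [c_eq_zero k j h, zero_mul]
    · rw [c_eq_zero (n - k) (n + 1 - j) (by omega), mul_zero]
  · intro h
    exact absurd (Finset.mem_range.mpr (by omega)) h
  · intro h
    exact absurd (Finset.mem_range.mpr (by omega)) h

/-- The identities `a₁ = 1 + z * a₁²` and `a₂ = z * a₁ + 2 * z * a₁ * a₂`. -/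
theorem a1_a2_eq :
    a1 = 1 + PowerSeries.X * a1^2 ∧
    a2 = PowerSeries.X * a1 + 2 * PowerSeries.X * a1 * a2 := by
  constructor
  · ext n
    cases n with
    | zero => simp [a1, c]
    | succ n =>
      rw [map_add, PowerSeries.coeff_succ_X_mul, pow_two, PowerSeries.coeff_mul,
        Finset.Nat.sum_antidiagonal_eq_sum_range_succ_mk]
      simp [a1, PowerSeries.coeff_one, c_succ_top]
  · -- Splitting `2 a₁ a₂` as `a₂ a₁ + a₁ a₂` matches the two sums of `c_succ_diag` termwise.
    have h : PowerSeries.X * a1 + 2 * PowerSeries.X * a1 * a2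
        = PowerSeries.X * (a1 + (a2 * a1 + a1 * a2)) := by ring
    rw [h]
    ext n
    cases n with
    | zero => simp [a2, c]
    | succ n =>
      rw [PowerSeries.coeff_succ_X_mul, map_add, map_add, PowerSeries.coeff_mul,
        PowerSeries.coeff_mul, Finset.Nat.sum_antidiagonal_eq_sum_range_succ_mk,
        Finset.Nat.sum_antidiagonal_eq_sum_range_succ_mk]
      simp [a1, a2, c_succ_diag, Finset.sum_add_distrib]
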